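/- Let N be a positive integer, p a real number with 1 < p and 2p < N, and set Λ_{N,p} := (N(p−1)(N−2p)/p²)^p. If 0 < λ < Λ_{N,p}, then every C^∞ compactly supported function φ : ℝ^N → ℝ satisfies ∫_{ℝ^N} (|Δφ(x)|^p − λ|φ(x)|^p/|x|^{2p} + |∇φ(x)|^p) dx ≥ (1 − λ/Λ_{N,p}) ∫_{ℝ^N} |Δφ(x)|^p dx + ∫_{ℝ^N} |∇φ(x)|^p dx; in particular this quantity is nonnegative, so the norm ‖φ‖_λ := (∫_{ℝ^N} (|Δφ|^p − λ|φ|^p/|x|^{2p} + |∇φ|^p) dx)^{1/p} is well defined. -/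

import Mathlib

/-!
The claim is the sharp `L^p` Rellich inequality `Λ ∫ |φ|^p / |x|^{2p} ≤ ∫ |Δφ|^p` (`rellich`)
multiplied by `lam / Λ`; the gradient term appears identically on both sides.

For the Rellich inequality, put `r = |x|² + ε` and integrate the divergence of the compactly
supported field `r^{1-p} |φ|^{p-2} φ ∇φ + (k / p) |φ|^p r^{-p} x`. The quadratic term
`r^{1-p} (p-1) |φ|^{p-2} |∇φ|²` absorbs the mixed term in `x · ∇φ` by completing a square with a
free parameter `c`, where `k = 2 (p-1) + 2 c` (`coordinate_estimate`). This is carried out one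
coordinate at a time. As `|φ|^{p-2} φ` need not be differentiable, it is first replaced by
`φ (φ² + η)^{p/2-1}`, and `η → 0` by dominated convergence (`coordinate_estimate_power`).
Summing over the coordinates, with `c = (p-1)(N-2p)/p`, gives
`C ∫ |φ|^p r^{-p} ≤ ∫ (|φ| / r)^{p-1} |Δφ|` where `C = N(p-1)(N-2p)/p²`, and Young's inequality
turns this into `C^p ∫ |φ|^p r^{-p} ≤ ∫ |Δφ|^p` (`pointwise_bound`, `rellich_regularised`).
Finally `ε → 0` by Fatou's lemma, which also yields integrability of `|φ|^p / |x|^{2p}`.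
-/

open MeasureTheory

/-- The Laplacian of a function `φ : ℝ^N → ℝ`, as the sum of its pure second
partial derivatives in the coordinate directions. -/
noncomputable def lap {N : ℕ} (φ : EuclideanSpace ℝ (Fin N) → ℝ)
    (x : EuclideanSpace ℝ (Fin N)) : ℝ :=
  ∑ i : Fin N, iteratedFDeriv ℝ 2 φ x ![EuclideanSpace.single i 1, EuclideanSpace.single i 1]

/-- The reciprocal `Λ_{N,p} = (N(p-1)(N-2p)/p²)^p` of the Rellich constant. -/
noncomputable def RellichLam (N : ℕ) (p : ℝ) : ℝ :=
  ((N : ℝ) * (p - 1) * ((N : ℝ) - 2 * p) / p ^ 2) ^ p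

open Filter Topology

/-! ### Integration by parts in one coordinate direction -/

/-- The coordinate form of the fact that the integral of a divergence vanishes. -/
lemma integral_hasLineDerivAt_eq_zero {N : ℕ} {f f' : EuclideanSpace ℝ (Fin N) → ℝ}
    {v : EuclideanSpace ℝ (Fin N)} (hf : Integrable f) (hf' : Integrable f')
    (h : ∀ x, HasLineDerivAt ℝ f (f' x) x v) : ∫ x, f' x = 0 := by
  have key := integral_bilinear_hasLineDerivAt_right_eq_neg_left_of_integrable
    (μ := volume) (f := fun _ : EuclideanSpace ℝ (Fin N) => (1 : ℝ)) (f' := fun _ => 0)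
    (g := f) (g' := f') (v := v) (B := ContinuousLinearMap.mul ℝ ℝ)
    (by simp) (by simpa using hf') (by simpa using hf)
    (fun x _ => hasDerivAt_const (0 : ℝ) (1 : ℝ)) (fun x _ => h x)
  simpa using key

lemma integrable_of_zero_off_compact {N : ℕ} {f : EuclideanSpace ℝ (Fin N) → ℝ}
    {K : Set (EuclideanSpace ℝ (Fin N))} (hK : IsCompact K) (hf : Continuous f)
    (h0 : ∀ x ∉ K, f x = 0) : Integrable f :=
  hf.integrable_of_hasCompactSupport (HasCompactSupport.intro hK h0)

/-- One coordinate of the weighted Hardy–Rellich estimate, for a `C¹` nonlinearity `g` with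
primitive `G`. The vector field is `r^{1-p} g(u) ∇u + k G(u) r^{-p} x` with `r = |x|² + ε`; the
mixed term `2 c g(u) r^{-p} xᵢ ∂ᵢu` in its divergence is absorbed by completing a square. -/
lemma coordinate_estimate {N : ℕ} (p c ε : ℝ) (hε : 0 < ε) (i : Fin N)
    {u du ddu : EuclideanSpace ℝ (Fin N) → ℝ} (hu : Continuous u) (hdu : Continuous du)
    (hddu : Continuous ddu)
    (hu' : ∀ x, HasLineDerivAt ℝ u (du x) x (EuclideanSpace.single i 1))
    (hdu' : ∀ x, HasLineDerivAt ℝ du (ddu x) x (EuclideanSpace.single i 1))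
    {K : Set (EuclideanSpace ℝ (Fin N))} (hK : IsCompact K) (hu0 : ∀ x ∉ K, u x = 0)
    (hdu0 : ∀ x ∉ K, du x = 0)
    {g dg G q : ℝ → ℝ} (hg : ∀ t, HasDerivAt g (dg t) t) (hG : ∀ t, HasDerivAt G (g t) t)
    (hdg : Continuous dg) (hq : Continuous q) (hpos : ∀ t, 0 < dg t)
    (hqg : ∀ t, q t * dg t = g t ^ 2) (hg0 : g 0 = 0) (hG0 : G 0 = 0) :
    ∫ x, ((‖x‖ ^ 2 + ε) ^ (1 - p) * g (u x) * ddu x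
      + (2 * (p - 1) + 2 * c) * G (u x) *
        ((‖x‖ ^ 2 + ε) ^ (-p) - 2 * p * x i ^ 2 * (‖x‖ ^ 2 + ε) ^ (-p - 1))
      - c ^ 2 * q (u x) * x i ^ 2 * (‖x‖ ^ 2 + ε) ^ (-p - 1)) ≤ 0 := by
  have hgc : Continuous g := continuous_iff_continuousAt.2 fun t => (hg t).continuousAt
  have hGc : Continuous G := continuous_iff_continuousAt.2 fun t => (hG t).continuousAt
  have hr (x : EuclideanSpace ℝ (Fin N)) : 0 < ‖x‖ ^ 2 + ε := by positivity
  have hrc (a : ℝ) : Continuous fun x : EuclideanSpace ℝ (Fin N) => (‖x‖ ^ 2 + ε) ^ a :=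
    Continuous.rpow_const (by fun_prop) fun x => Or.inl (hr x).ne'
  have hxi : Continuous fun x : EuclideanSpace ℝ (Fin N) => x i := by fun_prop
  have hq0 : q 0 = 0 := by
    have := hqg 0
    rw [hg0] at this
    have h2 := (hpos 0).ne'
    simpa [h2] using this
  have c1 := hrc (1 - p)
  have c2 := hrc (-p)
  have c3 := hrc (-p - 1)
  have cg := hgc.comp hu
  have cG := hGc.comp hu
  have cdg := hdg.comp hu
  have cq := hq.comp hu
  simp only [Function.comp_def] at cg cG cdg cq
  set k := 2 * (p - 1) + 2 * c with hk
  -- the `i`-th component of the vector field and its derivative in direction `i`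
  let F : EuclideanSpace ℝ (Fin N) → ℝ := fun x =>
    (‖x‖ ^ 2 + ε) ^ (1 - p) * g (u x) * du x + k * G (u x) * (‖x‖ ^ 2 + ε) ^ (-p) * x i
  let D : EuclideanSpace ℝ (Fin N) → ℝ := fun x =>
    (‖x‖ ^ 2 + ε) ^ (1 - p) * g (u x) * ddu x
      + (‖x‖ ^ 2 + ε) ^ (1 - p) * dg (u x) * du x ^ 2
      + 2 * c * g (u x) * (‖x‖ ^ 2 + ε) ^ (-p) * x i * du x
      + k * G (u x) *
        ((‖x‖ ^ 2 + ε) ^ (-p) - 2 * p * x i ^ 2 * (‖x‖ ^ 2 + ε) ^ (-p - 1))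
  have hFint : Integrable F := integrable_of_zero_off_compact hK (by fun_prop) fun x hx => by
    simp [F, hu0 x hx, hg0, hG0]
  have hDint : Integrable D := integrable_of_zero_off_compact hK (by fun_prop) fun x hx => by
    simp [D, hu0 x hx, hdu0 x hx, hg0, hG0]
  have hderiv (x : EuclideanSpace ℝ (Fin N)) :
      HasLineDerivAt ℝ F (D x) x (EuclideanSpace.single i 1) := by
    have e1 : HasDerivAt (fun t : ℝ => (x + t • EuclideanSpace.single i (1 : ℝ)) i) 1 0 := by
      simpa using (hasDerivAt_id (0 : ℝ)).const_add (x i)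
    have e2 : HasDerivAt
        (fun t : ℝ => ‖x + t • EuclideanSpace.single i (1 : ℝ)‖ ^ 2 + ε) (2 * x i) 0 := by
      have hl : HasDerivAt (fun t : ℝ => x + t • EuclideanSpace.single i (1 : ℝ))
          (EuclideanSpace.single i (1 : ℝ)) 0 := by
        simpa using ((hasDerivAt_id (0 : ℝ)).smul_const (EuclideanSpace.single i (1 : ℝ))).const_add x
      have := hl.norm_sq.add_const ε
      simpa [EuclideanSpace.inner_single_right] using this
    have e3 (a : ℝ) : HasDerivAt
        (fun t : ℝ => (‖x + t • EuclideanSpace.single i (1 : ℝ)‖ ^ 2 + ε) ^ a)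
        (2 * x i * a * (‖x‖ ^ 2 + ε) ^ (a - 1)) 0 := by
      simpa using e2.rpow_const (p := a) (Or.inl (by simpa using (hr x).ne'))
    have e4 : HasDerivAt (fun t : ℝ => g (u (x + t • EuclideanSpace.single i (1 : ℝ))))
        (dg (u x) * du x) 0 := by
      have h1 := hg (u (x + (0 : ℝ) • EuclideanSpace.single i (1 : ℝ)))
      simpa [Function.comp_def] using h1.comp (0 : ℝ) (hu' x)
    have e5 : HasDerivAt (fun t : ℝ => G (u (x + t • EuclideanSpace.single i (1 : ℝ))))
        (g (u x) * du x) 0 := by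
      have h1 := hG (u (x + (0 : ℝ) • EuclideanSpace.single i (1 : ℝ)))
      simpa [Function.comp_def] using h1.comp (0 : ℝ) (hu' x)
    have e6 := (((e3 (1 - p)).mul e4).mul (hdu' x)).add
      (((e5.const_mul k).mul (e3 (-p))).mul e1)
    refine HasDerivAt.congr_deriv e6 ?_
    have hexp : (1 - p - 1) = -p := by ring
    simp only [Pi.mul_apply, zero_smul, add_zero, hexp, D, hk]
    ring
  have hzero := integral_hasLineDerivAt_eq_zero hFint hDint hderiv
  rw [← hzero]
  refine integral_mono (integrable_of_zero_off_compact hK (by fun_prop) fun x hx => by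
    simp [hu0 x hx, hg0, hG0, hq0]) hDint fun x => ?_
  have hr1 : (‖x‖ ^ 2 + ε) ^ (1 - p) = (‖x‖ ^ 2 + ε) ^ (-p - 1) * (‖x‖ ^ 2 + ε) ^ 2 := by
    rw [← Real.rpow_two (‖x‖ ^ 2 + ε), ← Real.rpow_add (hr x)]; congr 1; ring
  have hr2 : (‖x‖ ^ 2 + ε) ^ (-p) = (‖x‖ ^ 2 + ε) ^ (-p - 1) * (‖x‖ ^ 2 + ε) := by
    conv_lhs => rw [show -p = (-p - 1) + 1 by ring, Real.rpow_add (hr x), Real.rpow_one]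
  have hsq : 0 ≤ (‖x‖ ^ 2 + ε) ^ (-p - 1) *
      (dg (u x) * (‖x‖ ^ 2 + ε) ^ 2 * du x ^ 2 +
        2 * c * g (u x) * (‖x‖ ^ 2 + ε) * x i * du x + c ^ 2 * q (u x) * x i ^ 2) := by
    refine mul_nonneg (Real.rpow_nonneg (hr x).le _) ?_
    have hd := hpos (u x)
    refine nonneg_of_mul_nonneg_right (a := dg (u x)) ?_ hd
    have : dg (u x) * (dg (u x) * (‖x‖ ^ 2 + ε) ^ 2 * du x ^ 2 +
        2 * c * g (u x) * (‖x‖ ^ 2 + ε) * x i * du x + c ^ 2 * q (u x) * x i ^ 2)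
        = (dg (u x) * (‖x‖ ^ 2 + ε) * du x + c * g (u x) * x i) ^ 2 := by
      linear_combination c ^ 2 * x i ^ 2 * hqg (u x)
    rw [this]; positivity
  simp only [D]
  have e1 : (‖x‖ ^ 2 + ε) ^ (1 - p) * dg (u x) * du x ^ 2
      + 2 * c * g (u x) * (‖x‖ ^ 2 + ε) ^ (-p) * x i * du x
      + c ^ 2 * q (u x) * x i ^ 2 * (‖x‖ ^ 2 + ε) ^ (-p - 1) = (‖x‖ ^ 2 + ε) ^ (-p - 1) *
      (dg (u x) * (‖x‖ ^ 2 + ε) ^ 2 * du x ^ 2 +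
        2 * c * g (u x) * (‖x‖ ^ 2 + ε) * x i * du x + c ^ 2 * q (u x) * x i ^ 2) := by
    rw [hr1, hr2]; ring
  linarith

/-! ### Removing the regularisation of the power nonlinearity -/

lemma reg_hasDerivAt_power (p : ℝ) {η : ℝ} (hη : 0 < η) (t : ℝ) :
    HasDerivAt (fun t : ℝ => t * (t ^ 2 + η) ^ (p / 2 - 1))
      ((t ^ 2 + η) ^ (p / 2 - 2) * ((p - 1) * t ^ 2 + η)) t := by
  have hs : 0 < t ^ 2 + η := by positivity
  have h1 : HasDerivAt (fun t : ℝ => t ^ 2 + η) (2 * t) t := by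
    simpa using (hasDerivAt_pow 2 t).add_const η
  have h2 := (hasDerivAt_id t).mul (h1.rpow_const (p := p / 2 - 1) (Or.inl hs.ne'))
  refine HasDerivAt.congr_deriv h2 ?_
  have e1 : (t ^ 2 + η) ^ (p / 2 - 1) = (t ^ 2 + η) ^ (p / 2 - 2) * (t ^ 2 + η) := by
    conv_lhs => rw [show p / 2 - 1 = (p / 2 - 2) + 1 by ring, Real.rpow_add hs, Real.rpow_one]
  have e2 : p / 2 - 1 - 1 = p / 2 - 2 := by ring
  simp only [id, e2, e1]
  ring

lemma reg_hasDerivAt_primitive {p : ℝ} (hp : 1 < p) {η : ℝ} (hη : 0 < η) (t : ℝ) :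
    HasDerivAt (fun t : ℝ => ((t ^ 2 + η) ^ (p / 2) - η ^ (p / 2)) / p)
      (t * (t ^ 2 + η) ^ (p / 2 - 1)) t := by
  have hs : 0 < t ^ 2 + η := by positivity
  have h1 : HasDerivAt (fun t : ℝ => t ^ 2 + η) (2 * t) t := by
    simpa using (hasDerivAt_pow 2 t).add_const η
  have h2 := ((h1.rpow_const (p := p / 2) (Or.inl hs.ne')).sub_const (η ^ (p / 2))).div_const p
  refine HasDerivAt.congr_deriv h2 ?_
  have : p ≠ 0 := by positivity
  field_simp

lemma reg_power_bound {p : ℝ} (hp : 1 < p) {η : ℝ} (hη : 0 < η) (hη1 : η ≤ 1) (t : ℝ) :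
    |t * (t ^ 2 + η) ^ (p / 2 - 1)| ≤ (t ^ 2 + 1) ^ ((p - 1) / 2) := by
  have hs : 0 < t ^ 2 + η := by positivity
  have h1 : |t| ≤ (t ^ 2 + η) ^ (1 / 2 : ℝ) := by
    rw [← Real.sqrt_eq_rpow]
    exact Real.abs_le_sqrt (by linarith)
  rw [abs_mul, abs_of_nonneg (Real.rpow_nonneg hs.le _)]
  calc |t| * (t ^ 2 + η) ^ (p / 2 - 1)
      ≤ (t ^ 2 + η) ^ (1 / 2 : ℝ) * (t ^ 2 + η) ^ (p / 2 - 1) := by gcongr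
    _ = (t ^ 2 + η) ^ ((p - 1) / 2) := by rw [← Real.rpow_add hs]; congr 1; ring
    _ ≤ (t ^ 2 + 1) ^ ((p - 1) / 2) := by
        apply Real.rpow_le_rpow hs.le (by linarith); linarith

lemma reg_primitive_bound {p : ℝ} (hp : 1 < p) {η : ℝ} (hη : 0 < η) (hη1 : η ≤ 1) (t : ℝ) :
    |((t ^ 2 + η) ^ (p / 2) - η ^ (p / 2)) / p| ≤ (t ^ 2 + 1) ^ (p / 2) / p := by
  have hp0 : 0 < p := by linarith
  have h1 : η ^ (p / 2) ≤ (t ^ 2 + η) ^ (p / 2) :=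
    Real.rpow_le_rpow hη.le (by nlinarith) (by linarith)
  have h2 : (t ^ 2 + η) ^ (p / 2) ≤ (t ^ 2 + 1) ^ (p / 2) :=
    Real.rpow_le_rpow (by positivity) (by linarith) (by linarith)
  have h3 : 0 ≤ η ^ (p / 2) := by positivity
  rw [abs_of_nonneg (div_nonneg (by linarith) hp0.le)]
  gcongr
  linarith

lemma reg_quotient_bound {p : ℝ} (hp : 1 < p) {η : ℝ} (hη : 0 < η) (hη1 : η ≤ 1) (t : ℝ) :
    |t ^ 2 * (t ^ 2 + η) ^ (p / 2) / ((p - 1) * t ^ 2 + η)| ≤ (t ^ 2 + 1) ^ (p / 2) / (p - 1) := by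
  have hp0 : 0 < p - 1 := by linarith
  have h2 : (t ^ 2 + η) ^ (p / 2) ≤ (t ^ 2 + 1) ^ (p / 2) :=
    Real.rpow_le_rpow (by positivity) (by linarith) (by linarith)
  have h3 : 0 ≤ (t ^ 2 + η) ^ (p / 2) := by positivity
  rw [abs_of_nonneg (by positivity), div_le_div_iff₀ (by positivity) hp0]
  have h4 : 0 ≤ (t ^ 2 + 1) ^ (p / 2) := by positivity
  nlinarith [mul_le_mul_of_nonneg_left h2 (by positivity : 0 ≤ (p - 1) * t ^ 2), mul_nonneg h4 hη.le]

/-- `coordinate_estimate` for the power nonlinearity `g(t) = |t|^{p-2} t`, written through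
`t ^ 2` so that it is the limit `η → 0` of `t (t² + η)^{p/2-1}`. -/
lemma coordinate_estimate_power {N : ℕ} {p : ℝ} (hp : 1 < p) (c : ℝ) {ε : ℝ} (hε : 0 < ε)
    (i : Fin N)
    {u du ddu : EuclideanSpace ℝ (Fin N) → ℝ} (hu : Continuous u) (hdu : Continuous du)
    (hddu : Continuous ddu)
    (hu' : ∀ x, HasLineDerivAt ℝ u (du x) x (EuclideanSpace.single i 1))
    (hdu' : ∀ x, HasLineDerivAt ℝ du (ddu x) x (EuclideanSpace.single i 1))
    {K : Set (EuclideanSpace ℝ (Fin N))} (hK : IsCompact K) (hu0 : ∀ x ∉ K, u x = 0)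
    (hdu0 : ∀ x ∉ K, du x = 0) :
    let J : EuclideanSpace ℝ (Fin N) → ℝ := fun x =>
      (‖x‖ ^ 2 + ε) ^ (1 - p) * (u x * (u x ^ 2) ^ (p / 2 - 1)) * ddu x
      + (2 * (p - 1) + 2 * c) * ((u x ^ 2) ^ (p / 2) / p) *
        ((‖x‖ ^ 2 + ε) ^ (-p) - 2 * p * x i ^ 2 * (‖x‖ ^ 2 + ε) ^ (-p - 1))
      - c ^ 2 * ((u x ^ 2) ^ (p / 2) / (p - 1)) * x i ^ 2 * (‖x‖ ^ 2 + ε) ^ (-p - 1)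
    Integrable J ∧ ∫ x, J x ≤ 0 := by
  intro J
  have hp0 : 0 < p := by linarith
  have hp1 : 0 < p - 1 := by linarith
  set k := 2 * (p - 1) + 2 * c with hk
  let e : ℕ → ℝ := fun n => 1 / ((n : ℝ) + 1)
  have he (n : ℕ) : 0 < e n := by simp only [e]; positivity
  have he1 (n : ℕ) : e n ≤ 1 := by
    simp only [e]
    rw [div_le_one (by positivity)]
    have : (0 : ℝ) ≤ n := by positivity
    linarith
  have het : Tendsto e atTop (𝓝 0) := tendsto_one_div_add_atTop_nhds_zero_nat
  let g : ℕ → ℝ → ℝ := fun n t => t * (t ^ 2 + e n) ^ (p / 2 - 1)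
  let dg : ℕ → ℝ → ℝ := fun n t => (t ^ 2 + e n) ^ (p / 2 - 2) * ((p - 1) * t ^ 2 + e n)
  let G : ℕ → ℝ → ℝ := fun n t => ((t ^ 2 + e n) ^ (p / 2) - e n ^ (p / 2)) / p
  let q : ℕ → ℝ → ℝ := fun n t => t ^ 2 * (t ^ 2 + e n) ^ (p / 2) / ((p - 1) * t ^ 2 + e n)
  have hsp (n : ℕ) (t : ℝ) : 0 < t ^ 2 + e n := by have := he n; positivity
  have hsp' (n : ℕ) (t : ℝ) : 0 < (p - 1) * t ^ 2 + e n := by have := he n; positivity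
  have hcs (n : ℕ) (a : ℝ) : Continuous fun t : ℝ => (t ^ 2 + e n) ^ a :=
    Continuous.rpow_const (by fun_prop) fun x => Or.inl (hsp n x).ne'
  have hgc (n : ℕ) : Continuous (g n) := continuous_id.mul (hcs n _)
  have hGc (n : ℕ) : Continuous (G n) := ((hcs n _).sub continuous_const).div_const _
  have hdgc (n : ℕ) : Continuous (dg n) := (hcs n _).mul (by fun_prop)
  have hqc (n : ℕ) : Continuous (q n) :=
    Continuous.div ((by fun_prop : Continuous fun t : ℝ => t ^ 2).mul (hcs n _)) (by fun_prop)
      fun t => (hsp' n t).ne'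
  have hqg (n : ℕ) (t : ℝ) : q n t * dg n t = g n t ^ 2 := by
    have h1 : (t ^ 2 + e n) ^ (p / 2) * (t ^ 2 + e n) ^ (p / 2 - 2)
        = ((t ^ 2 + e n) ^ (p / 2 - 1)) ^ 2 := by
      rw [← Real.rpow_add (hsp n t), ← Real.rpow_mul_natCast (hsp n t).le]
      congr 1; push_cast; ring
    have h2 := (hsp' n t).ne'
    simp only [q, dg, g]
    rw [mul_pow, ← h1, div_mul_eq_mul_div, div_eq_iff h2]
    ring
  have hr (x : EuclideanSpace ℝ (Fin N)) : 0 < ‖x‖ ^ 2 + ε := by positivity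
  have hrc (a : ℝ) : Continuous fun x : EuclideanSpace ℝ (Fin N) => (‖x‖ ^ 2 + ε) ^ a :=
    Continuous.rpow_const (by fun_prop) fun x => Or.inl (hr x).ne'
  have c1 := hrc (1 - p)
  have c2 := hrc (-p)
  have c3 := hrc (-p - 1)
  have hxi : Continuous fun x : EuclideanSpace ℝ (Fin N) => x i := by fun_prop
  let I : ℕ → EuclideanSpace ℝ (Fin N) → ℝ := fun n x =>
    (‖x‖ ^ 2 + ε) ^ (1 - p) * g n (u x) * ddu x
      + k * G n (u x) *
        ((‖x‖ ^ 2 + ε) ^ (-p) - 2 * p * x i ^ 2 * (‖x‖ ^ 2 + ε) ^ (-p - 1))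
      - c ^ 2 * q n (u x) * x i ^ 2 * (‖x‖ ^ 2 + ε) ^ (-p - 1)
  have hI (n : ℕ) : ∫ x, I n x ≤ 0 :=
    coordinate_estimate p c ε hε i hu hdu hddu hu' hdu' hK hu0 hdu0 (g := g n) (dg := dg n)
      (G := G n) (q := q n) (fun t => reg_hasDerivAt_power p (he n) t)
      (fun t => reg_hasDerivAt_primitive hp (he n) t) (hdgc n) (hqc n)
      (fun t => mul_pos (Real.rpow_pos_of_pos (hsp n t) _) (hsp' n t)) (hqg n)
      (by simp [g]) (by simp [G])
  have hIc (n : ℕ) : Continuous (I n) := by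
    have d1 := (hgc n).comp hu
    have d2 := (hGc n).comp hu
    have d3 := (hqc n).comp hu
    simp only [Function.comp_def] at d1 d2 d3
    fun_prop
  let B : EuclideanSpace ℝ (Fin N) → ℝ := fun x =>
    (‖x‖ ^ 2 + ε) ^ (1 - p) * (u x ^ 2 + 1) ^ ((p - 1) / 2) * |ddu x|
      + |k| * ((u x ^ 2 + 1) ^ (p / 2) / p) *
        |(‖x‖ ^ 2 + ε) ^ (-p) - 2 * p * x i ^ 2 * (‖x‖ ^ 2 + ε) ^ (-p - 1)|
      + c ^ 2 * ((u x ^ 2 + 1) ^ (p / 2) / (p - 1)) * x i ^ 2 * (‖x‖ ^ 2 + ε) ^ (-p - 1)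
  have hBc : Continuous B := by
    have hb (a : ℝ) : Continuous fun x => (u x ^ 2 + 1) ^ a :=
      Continuous.rpow_const (by fun_prop) fun x => Or.inl (by positivity)
    have b1 := hb ((p - 1) / 2)
    have b2 := hb (p / 2)
    fun_prop
  have hBint : Integrable (K.indicator B) :=
    (hBc.continuousOn.integrableOn_compact hK).integrable_indicator hK.measurableSet
  have hIB (n : ℕ) (x : EuclideanSpace ℝ (Fin N)) : ‖I n x‖ ≤ K.indicator B x := by
    by_cases hx : x ∈ K
    · rw [Set.indicator_of_mem hx, Real.norm_eq_abs]
      have b1 := reg_power_bound hp (he n) (he1 n) (u x)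
      have b2 := reg_primitive_bound hp (he n) (he1 n) (u x)
      have b3 := reg_quotient_bound hp (he n) (he1 n) (u x)
      have r1 : 0 ≤ (‖x‖ ^ 2 + ε) ^ (1 - p) := by positivity
      have r3 : 0 ≤ (‖x‖ ^ 2 + ε) ^ (-p - 1) := by positivity
      refine (abs_sub _ _).trans (add_le_add ((abs_add_le _ _).trans (add_le_add ?_ ?_)) ?_)
      · rw [abs_mul, abs_mul, abs_of_nonneg r1]
        gcongr
      · rw [abs_mul, abs_mul]
        gcongr
      · rw [abs_mul, abs_mul, abs_mul, abs_of_nonneg r3, abs_of_nonneg (sq_nonneg c),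
          abs_of_nonneg (sq_nonneg (x i))]
        gcongr
    · rw [Set.indicator_of_notMem hx]
      simp [I, g, G, q, hu0 x hx]
  have hlim (x : EuclideanSpace ℝ (Fin N)) : Tendsto (fun n => I n x) atTop (𝓝 (J x)) := by
    have hst (t : ℝ) : Tendsto (fun n => t ^ 2 + e n) atTop (𝓝 (t ^ 2)) := by
      simpa using het.const_add (t ^ 2)
    have l1 (t : ℝ) : Tendsto (fun n => g n t) atTop (𝓝 (t * (t ^ 2) ^ (p / 2 - 1))) := by
      rcases eq_or_ne t 0 with rfl | ht
      · simp [g]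
      · exact ((hst t).rpow_const (Or.inl (by positivity))).const_mul t
    have l2 (t : ℝ) : Tendsto (fun n => G n t) atTop (𝓝 ((t ^ 2) ^ (p / 2) / p)) := by
      have h1 := (hst t).rpow_const (p := p / 2) (Or.inr (by positivity))
      have h2 := het.rpow_const (p := p / 2) (Or.inr (by positivity))
      have h3 := (h1.sub h2).div_const p
      rwa [Real.zero_rpow (by positivity), sub_zero] at h3
    have l3 (t : ℝ) : Tendsto (fun n => q n t) atTop (𝓝 ((t ^ 2) ^ (p / 2) / (p - 1))) := by
      rcases eq_or_ne t 0 with rfl | ht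
      · have : (0 : ℝ) ^ (p / 2) = 0 := Real.zero_rpow (by positivity)
        simp [q, this]
      · have h1 := ((hst t).rpow_const (p := p / 2) (Or.inr (by positivity))).const_mul (t ^ 2)
        have h2 : Tendsto (fun n => (p - 1) * t ^ 2 + e n) atTop (𝓝 ((p - 1) * t ^ 2)) := by
          simpa using het.const_add ((p - 1) * t ^ 2)
        have h3 := h1.div h2 (by positivity)
        have h4 : t ^ 2 * (t ^ 2) ^ (p / 2) / ((p - 1) * t ^ 2) = (t ^ 2) ^ (p / 2) / (p - 1) := by
          field_simp
        rwa [h4] at h3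
    exact ((((l1 (u x)).const_mul _).mul_const _).add (((l2 (u x)).const_mul k).mul_const _)).sub
      ((((l3 (u x)).const_mul (c ^ 2)).mul_const _).mul_const _)
  have hJB (x : EuclideanSpace ℝ (Fin N)) : ‖J x‖ ≤ K.indicator B x :=
    le_of_tendsto (hlim x).norm (Eventually.of_forall fun n => hIB n x)
  have hJm : AEStronglyMeasurable J :=
    aestronglyMeasurable_of_tendsto_ae atTop (fun n => (hIc n).aestronglyMeasurable)
      (Eventually.of_forall hlim)
  refine ⟨hBint.mono' hJm (Eventually.of_forall hJB), ?_⟩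
  exact le_of_tendsto (tendsto_integral_of_dominated_convergence (K.indicator B)
    (fun n => (hIc n).aestronglyMeasurable) hBint (fun n => Eventually.of_forall (hIB n))
    (Eventually.of_forall hlim)) (Eventually.of_forall hI)

/-! ### The Rellich inequality -/

lemma young_scaled {p : ℝ} (hp : 1 < p) {C a b : ℝ} (hC : 0 < C) (ha : 0 ≤ a) (hb : 0 ≤ b) :
    C ^ (p - 1) * (a ^ (p - 1) * b) ≤ (p - 1) / p * (C ^ p * a ^ p) + b ^ p / p := by
  have hp0 : 0 < p := by linarith
  have hp1 : 0 < p - 1 := by linarith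
  have h := Real.young_inequality_of_nonneg hb (Real.rpow_nonneg (mul_nonneg hC.le ha) (p - 1))
    (Real.HolderConjugate.conjExponent hp)
  rw [← Real.rpow_mul (mul_nonneg hC.le ha), Real.conjExponent,
    show (p - 1) * (p / (p - 1)) = p by field_simp, Real.mul_rpow hC.le ha,
    Real.mul_rpow hC.le ha] at h
  have e : C ^ p * a ^ p / (p / (p - 1)) = (p - 1) / p * (C ^ p * a ^ p) := by field_simp
  rw [e] at h
  linarith

/-- The pointwise lower bound for the sum over the coordinates of the integrands of
`coordinate_estimate_power`, with `c = (p-1)(n-2p)/p` the optimal choice. Here `v`, `L`, `X`, `r`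
stand for `u`, `Δu`, `|x|²`, `|x|² + ε`. -/
lemma pointwise_bound {p n : ℝ} (hp : 1 < p) (hn : 2 * p < n) {v L X r : ℝ}
    (hr : 0 < r) (hXr : X ≤ r) :
    ((n * (p - 1) * (n - 2 * p) / p ^ 2) ^ p * (|v| ^ p * r ^ (-p)) - |L| ^ p) / p ≤
      (n * (p - 1) * (n - 2 * p) / p ^ 2) ^ (p - 1) *
      (r ^ (1 - p) * (v * (v ^ 2) ^ (p / 2 - 1)) * L
      + (2 * (p - 1) + 2 * ((p - 1) * (n - 2 * p) / p)) * ((v ^ 2) ^ (p / 2) / p) *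
        (n * r ^ (-p) - 2 * p * X * r ^ (-p - 1))
      - ((p - 1) * (n - 2 * p) / p) ^ 2 * ((v ^ 2) ^ (p / 2) / (p - 1)) * X * r ^ (-p - 1)) := by
  have hp0 : 0 < p := by linarith
  have hp1 : 0 < p - 1 := by linarith
  have hn1 : 0 < n - 2 * p := by linarith
  have hn0 : 0 < n := by linarith
  set C := n * (p - 1) * (n - 2 * p) / p ^ 2 with hCdef
  have hC : 0 < C := by positivity
  have hv : (v ^ 2) ^ (p / 2) = |v| ^ p := by
    rw [← sq_abs, ← Real.rpow_two, ← Real.rpow_mul (abs_nonneg v)]; congr 1; ring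
  have hv1 : |v * (v ^ 2) ^ (p / 2 - 1)| = |v| ^ (p - 1) := by
    rcases eq_or_ne v 0 with rfl | h0
    · simp [Real.zero_rpow hp1.ne']
    · have h1 : 0 < |v| := abs_pos.2 h0
      rw [abs_mul, abs_of_nonneg (by positivity : 0 ≤ (v ^ 2) ^ (p / 2 - 1)), ← sq_abs v,
        ← Real.rpow_two, ← Real.rpow_mul h1.le]
      nth_rewrite 1 [← Real.rpow_one |v|]
      rw [← Real.rpow_add h1]; congr 1; ring
  have hrp : r ^ (-p) = r ^ (-p - 1) * r := by
    conv_lhs => rw [show -p = (-p - 1) + 1 by ring, Real.rpow_add hr, Real.rpow_one]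
  have hap : (|v| / r) ^ p = |v| ^ p * r ^ (-p) := by
    rw [Real.div_rpow (abs_nonneg v) hr.le, Real.rpow_neg hr.le]; rfl
  have hap1 : (|v| / r) ^ (p - 1) = |v| ^ (p - 1) * r ^ (1 - p) := by
    rw [Real.div_rpow (abs_nonneg v) hr.le, show 1 - p = -(p - 1) by ring, Real.rpow_neg hr.le]; rfl
  have hy := young_scaled hp hC (div_nonneg (abs_nonneg v) hr.le) (abs_nonneg L)
  rw [hap, hap1] at hy
  have hCp : C ^ p = C ^ (p - 1) * C := by
    conv_lhs => rw [show p = (p - 1) + 1 by ring, Real.rpow_add hC, Real.rpow_one]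
  have h1 : -(|v| ^ (p - 1) * r ^ (1 - p) * |L|) ≤
      r ^ (1 - p) * (v * (v ^ 2) ^ (p / 2 - 1)) * L := by
    have := neg_abs_le (r ^ (1 - p) * (v * (v ^ 2) ^ (p / 2 - 1)) * L)
    rw [abs_mul, abs_mul, hv1, abs_of_nonneg (by positivity : 0 ≤ r ^ (1 - p))] at this
    linarith
  have h2 : C * (|v| ^ p * r ^ (-p)) ≤
      (2 * (p - 1) + 2 * ((p - 1) * (n - 2 * p) / p)) * (|v| ^ p / p) *
        (n * r ^ (-p) - 2 * p * X * r ^ (-p - 1))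
      - ((p - 1) * (n - 2 * p) / p) ^ 2 * (|v| ^ p / (p - 1)) * X * r ^ (-p - 1) := by
    have hm : 0 ≤ |v| ^ p * r ^ (-p - 1) := by positivity
    have key : (2 * (p - 1) + 2 * ((p - 1) * (n - 2 * p) / p)) * (|v| ^ p / p) *
        (n * r ^ (-p) - 2 * p * X * r ^ (-p - 1))
      - ((p - 1) * (n - 2 * p) / p) ^ 2 * (|v| ^ p / (p - 1)) * X * r ^ (-p - 1)
      - C * (|v| ^ p * r ^ (-p)) =
      (|v| ^ p * r ^ (-p - 1)) * ((2 * (2 * (p - 1) + 2 * ((p - 1) * (n - 2 * p) / p))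
        + ((p - 1) * (n - 2 * p) / p) ^ 2 / (p - 1)) * (r - X)) := by
      rw [hrp, hCdef]
      field_simp
      ring
    have : 0 ≤ (|v| ^ p * r ^ (-p - 1)) * ((2 * (2 * (p - 1) + 2 * ((p - 1) * (n - 2 * p) / p))
        + ((p - 1) * (n - 2 * p) / p) ^ 2 / (p - 1)) * (r - X)) :=
      mul_nonneg hm (mul_nonneg (by positivity) (by linarith))
    linarith
  rw [hv]
  have h3 := mul_le_mul_of_nonneg_left (add_le_add h1 h2)
    (by positivity : 0 ≤ C ^ (p - 1))
  have h4 : C ^ (p - 1) * (C * (|v| ^ p * r ^ (-p))) = C ^ p * (|v| ^ p * r ^ (-p)) := by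
    rw [hCp]; ring
  rw [mul_add, h4] at h3
  have h5 : (C ^ p * (|v| ^ p * r ^ (-p)) - |L| ^ p) / p =
      C ^ p * (|v| ^ p * r ^ (-p)) - ((p - 1) / p * (C ^ p * (|v| ^ p * r ^ (-p))) + |L| ^ p / p) := by
    field_simp
    ring
  rw [h5]
  linarith

lemma lap_eq_sum {N : ℕ} {φ : EuclideanSpace ℝ (Fin N) → ℝ} (x : EuclideanSpace ℝ (Fin N)) :
    lap φ x = ∑ i : Fin N, fderiv ℝ (fderiv ℝ φ) x (EuclideanSpace.single i 1)
      (EuclideanSpace.single i 1) := by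
  simp [lap, iteratedFDeriv_two_apply]

lemma continuous_lap {N : ℕ} {φ : EuclideanSpace ℝ (Fin N) → ℝ} (hφ : ContDiff ℝ (⊤ : ℕ∞) φ) :
    Continuous (lap φ) := by
  have h1 : ContDiff ℝ 1 (fderiv ℝ φ) :=
    (contDiff_infty.1 hφ 2).fderiv_right (by norm_num)
  have h2 : Continuous (fderiv ℝ (fderiv ℝ φ)) := h1.continuous_fderiv one_ne_zero
  rw [funext lap_eq_sum]
  fun_prop

lemma integrable_lap_rpow {N : ℕ} {p : ℝ} (hp : 1 < p) {φ : EuclideanSpace ℝ (Fin N) → ℝ}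
    (hφ : ContDiff ℝ (⊤ : ℕ∞) φ) (hsupp : HasCompactSupport φ) :
    Integrable fun x => |lap φ x| ^ p := by
  refine integrable_of_zero_off_compact (hsupp.fderiv ℝ |>.fderiv ℝ).isCompact
    ((continuous_lap hφ).abs.rpow_const fun x => Or.inr (by linarith)) fun x hx => ?_
  rw [lap_eq_sum, image_eq_zero_of_notMem_tsupport hx]
  simp [Real.zero_rpow (by linarith : p ≠ 0)]

/-- The Rellich inequality with the weight `|x|^{-2p}` replaced by `(|x|² + ε)^{-p}`. -/
lemma rellich_regularised {N : ℕ} {p : ℝ} (hp : 1 < p) (hpN : 2 * p < (N : ℝ))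
    {φ : EuclideanSpace ℝ (Fin N) → ℝ} (hφ : ContDiff ℝ (⊤ : ℕ∞) φ)
    (hsupp : HasCompactSupport φ) {ε : ℝ} (hε : 0 < ε) :
    Integrable (fun x => |φ x| ^ p * (‖x‖ ^ 2 + ε) ^ (-p)) ∧
    RellichLam N p * ∫ x, |φ x| ^ p * (‖x‖ ^ 2 + ε) ^ (-p) ≤ ∫ x, |lap φ x| ^ p := by
  have hp0 : 0 < p := by linarith
  have h1 : ContDiff ℝ 1 (fderiv ℝ φ) :=
    (contDiff_infty.1 hφ 2).fderiv_right (by norm_num)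
  have h0 : Continuous (fderiv ℝ φ) := h1.continuous
  have h2 : Continuous (fderiv ℝ (fderiv ℝ φ)) := h1.continuous_fderiv one_ne_zero
  have hd (x) : HasFDerivAt φ (fderiv ℝ φ x) x :=
    (hφ.differentiable (by simp) x).hasFDerivAt
  have hdd (x) : HasFDerivAt (fderiv ℝ φ) (fderiv ℝ (fderiv ℝ φ) x) x :=
    (h1.differentiable (by simp) x).hasFDerivAt
  have hr (x : EuclideanSpace ℝ (Fin N)) : 0 < ‖x‖ ^ 2 + ε := by positivity
  have hrc : Continuous fun x : EuclideanSpace ℝ (Fin N) => (‖x‖ ^ 2 + ε) ^ (-p) :=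
    Continuous.rpow_const (by fun_prop) fun x => Or.inl (hr x).ne'
  have hint : Integrable (fun x => |φ x| ^ p * (‖x‖ ^ 2 + ε) ^ (-p)) := by
    refine integrable_of_zero_off_compact hsupp.isCompact
      ((hφ.continuous.abs.rpow_const fun x => Or.inr hp0.le).mul hrc) fun x hx => ?_
    simp [image_eq_zero_of_notMem_tsupport hx, Real.zero_rpow hp0.ne']
  refine ⟨hint, ?_⟩
  have hlint := integrable_lap_rpow hp hφ hsupp
  have hJ := fun i : Fin N => coordinate_estimate_power hp
    ((p - 1) * ((N : ℝ) - 2 * p) / p) hε i (u := φ)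
    (du := fun x => fderiv ℝ φ x (EuclideanSpace.single i 1))
    (ddu := fun x => fderiv ℝ (fderiv ℝ φ) x (EuclideanSpace.single i 1)
      (EuclideanSpace.single i 1)) hφ.continuous (by fun_prop) (by fun_prop)
    (fun x => (hd x).hasLineDerivAt _)
    (fun x => by
      simpa using ((hdd x).clm_apply
        (hasFDerivAt_const (EuclideanSpace.single i (1 : ℝ)) x)).hasLineDerivAt
          (EuclideanSpace.single i 1))
    hsupp.isCompact (fun x hx => image_eq_zero_of_notMem_tsupport hx)
    (fun x hx => by
      rw [image_eq_zero_of_notMem_tsupport fun h => hx (tsupport_fderiv_subset ℝ h)]; simp)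
  have hsum := integral_finsetSum Finset.univ fun i _ => (hJ i).1
  have hle := Finset.sum_nonpos fun i (_ : i ∈ Finset.univ) => (hJ i).2
  rw [← hsum] at hle
  have hsint := integrable_finsetSum Finset.univ fun i _ => (hJ i).1
  have hCpos : 0 < (N : ℝ) * (p - 1) * ((N : ℝ) - 2 * p) / p ^ 2 := by
    have : 0 < p - 1 := by linarith
    have : 0 < (N : ℝ) - 2 * p := by linarith
    have : 0 < (N : ℝ) := by linarith
    positivity
  have hmono := integral_mono (((hint.const_mul (RellichLam N p)).sub hlint).div_const p)
    (hsint.const_mul (((N : ℝ) * (p - 1) * ((N : ℝ) - 2 * p) / p ^ 2) ^ (p - 1))) fun x => by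
    have := pointwise_bound hp hpN (v := φ x) (L := lap φ x) (hr x)
      (le_add_of_nonneg_right hε.le : ‖x‖ ^ 2 ≤ ‖x‖ ^ 2 + ε)
    refine this.trans (le_of_eq ?_)
    congr 1
    have hx : ‖x‖ ^ 2 = ∑ i, x i ^ 2 := EuclideanSpace.real_norm_sq_eq x
    rw [Finset.sum_sub_distrib, Finset.sum_add_distrib, ← Finset.mul_sum, ← Finset.mul_sum,
      Finset.sum_sub_distrib, ← Finset.sum_mul, ← Finset.sum_mul, ← Finset.mul_sum,
      ← Finset.mul_sum, ← hx, ← lap_eq_sum]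
    simp
  rw [integral_const_mul, integral_div, integral_sub' (hint.const_mul _) hlint,
    integral_const_mul] at hmono
  have := hmono.trans (mul_nonpos_of_nonneg_of_nonpos (by positivity) hle)
  rw [div_le_iff₀ hp0, zero_mul] at this
  linarith

/-- The sharp `L^p` Rellich inequality; integrability of the singular term comes for free from
Fatou's lemma. -/
lemma rellich {N : ℕ} (hN : 0 < N) {p : ℝ} (hp : 1 < p) (hpN : 2 * p < (N : ℝ))
    {φ : EuclideanSpace ℝ (Fin N) → ℝ} (hφ : ContDiff ℝ (⊤ : ℕ∞) φ)
    (hsupp : HasCompactSupport φ) :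
    Integrable (fun x => |φ x| ^ p / ‖x‖ ^ (2 * p)) ∧
    RellichLam N p * ∫ x, |φ x| ^ p / ‖x‖ ^ (2 * p) ≤ ∫ x, |lap φ x| ^ p := by
  have hp0 : 0 < p := by linarith
  have hLam : 0 < RellichLam N p := by
    have : 0 < p - 1 := by linarith
    have : 0 < (N : ℝ) - 2 * p := by linarith
    have : 0 < (N : ℝ) := by linarith
    unfold RellichLam
    positivity
  let e : ℕ → ℝ := fun n => 1 / ((n : ℝ) + 1)
  have he (n : ℕ) : 0 < e n := by simp only [e]; positivity
  have het : Tendsto e atTop (𝓝 0) := tendsto_one_div_add_atTop_nhds_zero_nat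
  have hreg := fun n => rellich_regularised hp hpN hφ hsupp (he n)
  have hmeas : AEStronglyMeasurable (fun x => |φ x| ^ p / ‖x‖ ^ (2 * p)) := by
    have h1 : Measurable fun x => |φ x| ^ p :=
      (hφ.continuous.abs.rpow_const fun x => Or.inr hp0.le).measurable
    have h2 : Measurable fun x : EuclideanSpace ℝ (Fin N) => ‖x‖ ^ (2 * p) :=
      (continuous_norm.rpow_const fun x => Or.inr (by positivity)).measurable
    exact (h1.div h2).aestronglyMeasurable
  have hnn : 0 ≤ᵐ[volume] fun x => |φ x| ^ p / ‖x‖ ^ (2 * p) :=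
    Eventually.of_forall fun x => by simp only [Pi.zero_apply]; positivity
  have hlim (x : EuclideanSpace ℝ (Fin N)) (hx : x ≠ 0) :
      Tendsto (fun n => |φ x| ^ p * (‖x‖ ^ 2 + e n) ^ (-p)) atTop
        (𝓝 (|φ x| ^ p / ‖x‖ ^ (2 * p))) := by
    have hx0 : 0 < ‖x‖ := norm_pos_iff.2 hx
    have h1 : Tendsto (fun n => ‖x‖ ^ 2 + e n) atTop (𝓝 (‖x‖ ^ 2)) := by
      simpa using het.const_add (‖x‖ ^ 2)
    have h2 := (h1.rpow_const (p := -p) (Or.inl (by positivity))).const_mul (|φ x| ^ p)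
    have h3 : (‖x‖ ^ 2) ^ (-p) = (‖x‖ ^ (2 * p))⁻¹ := by
      rw [Real.rpow_neg (by positivity), ← Real.rpow_two, ← Real.rpow_mul hx0.le]
    rwa [h3] at h2
  have : Nonempty (Fin N) := ⟨⟨0, hN⟩⟩
  have hae : ∀ᵐ x : EuclideanSpace ℝ (Fin N), x ≠ 0 := by
    simp [ae_iff, measure_singleton]
  have hfatou : ∫⁻ x, ENNReal.ofReal (|φ x| ^ p / ‖x‖ ^ (2 * p)) ≤
      ENNReal.ofReal ((∫ x, |lap φ x| ^ p) / RellichLam N p) := by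
    calc ∫⁻ x, ENNReal.ofReal (|φ x| ^ p / ‖x‖ ^ (2 * p))
        = ∫⁻ x, liminf (fun n => ENNReal.ofReal (|φ x| ^ p * (‖x‖ ^ 2 + e n) ^ (-p))) atTop := by
          refine lintegral_congr_ae (hae.mono fun x hx => ?_)
          exact ((ENNReal.continuous_ofReal.tendsto _).comp (hlim x hx)).liminf_eq.symm
      _ ≤ liminf (fun n => ∫⁻ x, ENNReal.ofReal (|φ x| ^ p * (‖x‖ ^ 2 + e n) ^ (-p))) atTop :=
          lintegral_liminf_le' fun n => (hreg n).1.aestronglyMeasurable.aemeasurable.ennreal_ofReal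
      _ ≤ ENNReal.ofReal ((∫ x, |lap φ x| ^ p) / RellichLam N p) := by
          refine liminf_le_of_le (by isBoundedDefault) fun b hb => ?_
          obtain ⟨n, hn⟩ := hb.exists
          refine hn.trans ?_
          have hpos (x : EuclideanSpace ℝ (Fin N)) : 0 < ‖x‖ ^ 2 + e n := by
            have := he n
            positivity
          rw [← ofReal_integral_eq_lintegral_ofReal (hreg n).1
            (Eventually.of_forall fun x => mul_nonneg (by positivity)
              (Real.rpow_nonneg (hpos x).le _))]
          refine ENNReal.ofReal_le_ofReal ?_
          rw [le_div_iff₀ hLam, mul_comm]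
          exact (hreg n).2
  have hint : Integrable (fun x => |φ x| ^ p / ‖x‖ ^ (2 * p)) := by
    refine ⟨hmeas, ?_⟩
    rw [hasFiniteIntegral_iff_ofReal hnn]
    exact hfatou.trans_lt ENNReal.ofReal_lt_top
  refine ⟨hint, ?_⟩
  rw [← ofReal_integral_eq_lintegral_ofReal hint hnn, ENNReal.ofReal_le_ofReal_iff
    (div_nonneg (integral_nonneg fun x => by positivity) hLam.le), le_div_iff₀ hLam] at hfatou
  linarith

/-- For `0 < λ < Λ_{N,p}`, the quantity defining the norm `‖·‖_λ` is bounded below by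
`(1 - λ/Λ_{N,p}) ∫ |Δφ|^p + ∫ |∇φ|^p`; in particular it is nonnegative. -/
theorem norm_lambda_lower_bound (N : ℕ) (hN : 0 < N) (p : ℝ) (hp : 1 < p)
    (hpN : 2 * p < (N : ℝ)) (lam : ℝ) (hlam0 : 0 < lam) (hlam : lam < RellichLam N p)
    (φ : EuclideanSpace ℝ (Fin N) → ℝ) (hφ : ContDiff ℝ (⊤ : ℕ∞) φ)
    (hsupp : HasCompactSupport φ) :
    ∫ x : EuclideanSpace ℝ (Fin N),
        (|lap φ x| ^ p - lam * |φ x| ^ p / ‖x‖ ^ (2 * p) + ‖fderiv ℝ φ x‖ ^ p) ≥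
      (1 - lam / RellichLam N p) * (∫ x : EuclideanSpace ℝ (Fin N), |lap φ x| ^ p) +
        ∫ x : EuclideanSpace ℝ (Fin N), ‖fderiv ℝ φ x‖ ^ p := by
  have hp0 : 0 < p := by linarith
  have hLam : 0 < RellichLam N p := hlam0.trans hlam
  obtain ⟨hint, hrel⟩ := rellich hN hp hpN hφ hsupp
  have hlap := integrable_lap_rpow hp hφ hsupp
  have hgrad : Integrable fun x => ‖fderiv ℝ φ x‖ ^ p := by
    refine integrable_of_zero_off_compact (hsupp.fderiv ℝ).isCompact
      ((hφ.continuous_fderiv (by simp)).norm.rpow_const fun x => Or.inr hp0.le) fun x hx => ?_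
    simp [image_eq_zero_of_notMem_tsupport hx, Real.zero_rpow hp0.ne']
  have hsub : Integrable fun x => |lap φ x| ^ p - lam * (|φ x| ^ p / ‖x‖ ^ (2 * p)) :=
    hlap.sub (hint.const_mul lam)
  simp only [mul_div_assoc]
  rw [integral_add hsub hgrad, integral_sub hlap (hint.const_mul lam),
    integral_const_mul]
  have h1 := mul_le_mul_of_nonneg_left hrel (div_nonneg hlam0.le hLam.le)
  have h2 : lam / RellichLam N p * (RellichLam N p * ∫ x, |φ x| ^ p / ‖x‖ ^ (2 * p)) =
      lam * ∫ x, |φ x| ^ p / ‖x‖ ^ (2 * p) := by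
    field_simp
  rw [h2] at h1
  linarith
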